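/- Let H be a partial mixed graph and M a completion of H. If p = ⟨V_0, V_1, …, V_k⟩ is an uncovered possible directed path in H, and in M the edge between V_0 and V_1 is V_0 → V_1, then in M the whole path p is a directed path V_0 → V_1 → ⋯ → V_k. -/

import Mathlib

/-- Marks at edge ends in a partial mixed graph. -/
inductive Mark : Type
  | tail
  | arrow
  | circle
deriving DecidableEq

/-- A partial mixed graph (PMG): a symmetric irreflexive adjacency relation together
with, for each ordered pair `(a, b)` of adjacent vertices, a mark `mark a b` at `b` on
the edge `a–b`, such that no edge has tails at both endpoints. -/
structure PMG (V : Type) where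
  adj : V → V → Prop
  symm : ∀ a b, adj a b → adj b a
  irrefl : ∀ a, ¬ adj a a
  mark : V → V → Mark
  noDoubleTail : ∀ a b, adj a b → ¬ (mark a b = Mark.tail ∧ mark b a = Mark.tail)

namespace PMG

variable {V : Type}

/-- `a → b`: adjacent, tail at `a`, arrowhead at `b`. -/
def dir (G : PMG V) (a b : V) : Prop :=
  G.adj a b ∧ G.mark b a = Mark.tail ∧ G.mark a b = Mark.arrow

/-- `a ↔ b`: adjacent, arrowheads at both endpoints. -/
def bidir (G : PMG V) (a b : V) : Prop :=
  G.adj a b ∧ G.mark b a = Mark.arrow ∧ G.mark a b = Mark.arrow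

/-- `a` is an ancestor of `b`: `a = b` or there is a directed path from `a` to `b`. -/
def Anc (G : PMG V) (a b : V) : Prop :=
  Relation.ReflTransGen G.dir a b

/-- `a` is an ancestor of some vertex of the set `S`. -/
def AncSet (G : PMG V) (a : V) (S : Set V) : Prop :=
  ∃ v ∈ S, G.Anc a v

/-- A mixed graph: a PMG with no circle marks. -/
def IsMixed (G : PMG V) : Prop :=
  ∀ a b, G.adj a b → G.mark a b ≠ Mark.circle

/-- Ancestral: no directed cycles and no almost directed cycles. -/
def Ancestral (G : PMG V) : Prop :=
  ∀ a b, G.Anc a b → a ≠ b → ¬ G.dir b a ∧ ¬ G.bidir a b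

/-- Unshielded collider `(a, b, c)`: `a, c` both adjacent to `b`, `a` and `c`
distinct and nonadjacent, arrowheads at `b` on both edges. -/
def UnshieldedCollider (G : PMG V) (a b c : V) : Prop :=
  a ≠ c ∧ G.adj a b ∧ G.adj c b ∧ ¬ G.adj a c ∧
    G.mark a b = Mark.arrow ∧ G.mark c b = Mark.arrow

/-- `M` is a completion of the PMG `H`: same vertices and adjacencies, all non-circle
marks of `H` occur identically in `M`, `M` is an ancestral mixed graph, and every
unshielded collider of `M` is already an unshielded collider of `H`. -/
def Completion (H M : PMG V) : Prop :=
  (∀ a b, M.adj a b ↔ H.adj a b) ∧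
  (∀ a b, H.adj a b → H.mark a b ≠ Mark.circle → M.mark a b = H.mark a b) ∧
  M.IsMixed ∧ M.Ancestral ∧
  (∀ a b c, M.UnshieldedCollider a b c → H.UnshieldedCollider a b c)

/-- An edge usable in a possible directed path from `a` to `b`:
adjacent, no arrowhead at `a`, no tail at `b`. -/
def possEdge (G : PMG V) (a b : V) : Prop :=
  G.adj a b ∧ G.mark b a ≠ Mark.arrow ∧ G.mark a b ≠ Mark.tail

/-- A circle edge: adjacent with circle marks at both endpoints. -/
def circleEdge (G : PMG V) (a b : V) : Prop :=
  G.adj a b ∧ G.mark a b = Mark.circle ∧ G.mark b a = Mark.circle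

/-- `p 0, …, p n` is a path: distinct vertices, consecutive ones adjacent. -/
def IsPathOn (G : PMG V) (p : ℕ → V) (n : ℕ) : Prop :=
  (∀ i ≤ n, ∀ j ≤ n, p i = p j → i = j) ∧ ∀ i < n, G.adj (p i) (p (i+1))

/-- `p 0, …, p n` is a possible directed path. -/
def IsPossDirPathOn (G : PMG V) (p : ℕ → V) (n : ℕ) : Prop :=
  (∀ i ≤ n, ∀ j ≤ n, p i = p j → i = j) ∧ ∀ i < n, G.possEdge (p i) (p (i+1))

/-- `p 0, …, p n` is a circle path. -/
def IsCirclePathOn (G : PMG V) (p : ℕ → V) (n : ℕ) : Prop :=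
  (∀ i ≤ n, ∀ j ≤ n, p i = p j → i = j) ∧ ∀ i < n, G.circleEdge (p i) (p (i+1))

/-- The path `p 0, …, p n` is uncovered: any two nonconsecutive neighbours of an
internal vertex are nonadjacent. -/
def UncoveredOn (G : PMG V) (p : ℕ → V) (n : ℕ) : Prop :=
  ∀ i, i + 2 ≤ n → ¬ G.adj (p i) (p (i+2))

/-- `F_x` relative to `V'`: the vertices of `V'` adjacent to `x` whose edge carries
a circle or an arrowhead at `x`. -/
def Fset (G : PMG V) (V' : Set V) (x : V) : Set V :=
  {v | v ∈ V' ∧ G.adj v x ∧ (G.mark v x = Mark.circle ∨ G.mark v x = Mark.arrow)}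

/-- `p 0, …, p n` is an unbridged path relative to `V'` in `G`: an uncovered circle
path with at least one edge, lying in `G[−V']`, with
`F_{p 0} \ F_{p 1} ≠ ∅` and `F_{p n} \ F_{p (n-1)} ≠ ∅`. -/
def UnbridgedOn (G : PMG V) (V' : Set V) (p : ℕ → V) (n : ℕ) : Prop :=
  1 ≤ n ∧ G.IsCirclePathOn p n ∧ G.UncoveredOn p n ∧
  (∀ i ≤ n, p i ∉ V') ∧
  (G.Fset V' (p 0) \ G.Fset V' (p 1)).Nonempty ∧
  (G.Fset V' (p n) \ G.Fset V' (p (n-1))).Nonempty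

/-- The set `S_A`: `A` together with all vertices adjacent to `A` whose edge has an
arrowhead at `A`. -/
def SA (G : PMG V) (A : V) : Set V :=
  {A} ∪ {v | G.adj v A ∧ G.mark v A = Mark.arrow}

end PMG

/-! If `V_{i-1} → V_i` in `M`, then an arrowhead at `V_i` on the next edge of `M` would make
`(V_{i-1}, V_i, V_{i+1})` an unshielded collider of `M`, hence of `H`, although `H` has no
arrowhead at `V_i` on that edge. Being neither an arrowhead nor a circle, this mark is a tail, and
since no edge has two tails, `V_i → V_{i+1}`. The direction of the first edge thus propagates
along the path. -/

namespace PMG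

variable {V : Type} {G : PMG V} {a b c : V} {p : ℕ → V} {k : ℕ}

theorem IsMixed.dir_of_mark_ne_arrow (hG : G.IsMixed) (hab : G.adj a b)
    (ha : G.mark b a ≠ Mark.arrow) : G.dir a b := by
  have tail_of_ne_arrow {x y : V} (hxy : G.adj x y) (hy : G.mark x y ≠ Mark.arrow) :
      G.mark x y = Mark.tail := by
    cases h : G.mark x y with
    | tail => rfl
    | arrow => exact absurd h hy
    | circle => exact absurd h (hG x y hxy)
  have tail_at_a : G.mark b a = Mark.tail := tail_of_ne_arrow (G.symm a b hab) ha
  have arrow_at_b : G.mark a b = Mark.arrow := by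
    by_contra hb
    exact G.noDoubleTail a b hab ⟨tail_of_ne_arrow hab hb, tail_at_a⟩
  exact ⟨hab, tail_at_a, arrow_at_b⟩

theorem IsMixed.dir_of_not_unshieldedCollider (hG : G.IsMixed) (hab : G.adj a b)
    (hbc : G.adj b c) (hne : a ≠ c) (hac : ¬ G.adj a c) (harrow : G.mark a b = Mark.arrow)
    (hcol : ¬ G.UnshieldedCollider a b c) : G.dir b c :=
  hG.dir_of_mark_ne_arrow hbc fun hb => hcol ⟨hne, hab, G.symm b c hbc, hac, harrow, hb⟩

theorem IsMixed.dir_of_uncoveredOn_of_not_unshieldedCollider (hG : G.IsMixed)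
    (hadj : ∀ i < k, G.adj (p i) (p (i + 1))) (hne : ∀ i, i + 2 ≤ k → p i ≠ p (i + 2))
    (hunc : G.UncoveredOn p k)
    (hcol : ∀ i, i + 2 ≤ k → ¬ G.UnshieldedCollider (p i) (p (i + 1)) (p (i + 2)))
    (h01 : G.dir (p 0) (p 1)) : ∀ i < k, G.dir (p i) (p (i + 1))
  | 0, _ => h01
  | i + 1, hi => by
    obtain ⟨hprev, -, harrow⟩ :=
      hG.dir_of_uncoveredOn_of_not_unshieldedCollider hadj hne hunc hcol h01 i (by omega)
    exact hG.dir_of_not_unshieldedCollider hprev (hadj (i + 1) hi) (hne i hi) (hunc i hi) harrow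
      (hcol i hi)

theorem IsPossDirPathOn.ne_add_two (hp : G.IsPossDirPathOn p k) {i : ℕ} (hi : i + 2 ≤ k) :
    p i ≠ p (i + 2) := fun h => by
  have : i = i + 2 := hp.1 i (by omega) (i + 2) hi h
  omega

end PMG

theorem uncovered_ppd_path_directed_general {V : Type} {H M : PMG V}
    (hadj : ∀ a b, M.adj a b ↔ H.adj a b) (hmix : M.IsMixed)
    (hcol : ∀ a b c, M.UnshieldedCollider a b c → H.UnshieldedCollider a b c)
    {p : ℕ → V} {k : ℕ} (hwalk : ∀ i < k, H.adj (p i) (p (i + 1)))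
    (hne : ∀ i, i + 2 ≤ k → p i ≠ p (i + 2))
    (hmark : ∀ i < k, H.mark (p (i + 1)) (p i) ≠ Mark.arrow) (hunc : H.UncoveredOn p k)
    (h01 : M.dir (p 0) (p 1)) : ∀ i < k, M.dir (p i) (p (i + 1)) := by
  have hwalkM : ∀ i < k, M.adj (p i) (p (i + 1)) := fun i hi => (hadj _ _).2 (hwalk i hi)
  have huncM : M.UncoveredOn p k := fun i hi h => hunc i hi ((hadj _ _).1 h)
  have hcolM : ∀ i, i + 2 ≤ k → ¬ M.UnshieldedCollider (p i) (p (i + 1)) (p (i + 2)) := by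
    intro i hi h
    obtain ⟨-, -, -, -, -, harrow⟩ := hcol _ _ _ h
    exact hmark (i + 1) hi harrow
  exact hmix.dir_of_uncoveredOn_of_not_unshieldedCollider hwalkM hne huncM hcolM h01

/-- If `p = ⟨V_0, …, V_k⟩` is an uncovered possible directed path in the PMG `H`,
and in a completion `M` of `H` the edge between `V_0` and `V_1` is `V_0 → V_1`,
then in `M` the whole path is a directed path `V_0 → V_1 → ⋯ → V_k`. -/
theorem uncovered_ppd_path_directed {V : Type} (H M : PMG V)
    (hHM : PMG.Completion H M)
    (p : ℕ → V) (k : ℕ) (hk : 1 ≤ k)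
    (hpath : H.IsPossDirPathOn p k) (hunc : H.UncoveredOn p k)
    (h01 : M.dir (p 0) (p 1)) :
    ∀ i < k, M.dir (p i) (p (i+1)) := by
  obtain ⟨hadj, -, hmix, -, hcol⟩ := hHM
  exact uncovered_ppd_path_directed_general hadj hmix hcol (fun i hi => (hpath.2 i hi).1)
    (fun _ => hpath.ne_add_two) (fun i hi => (hpath.2 i hi).2.1) hunc h01
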